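/- Let a_0(n) = 2 and a_1(n) = −3 for all n. There exists a constant C > 0 such that for every f ∈ C[0,1] and every n ≥ 1, sup_{x ∈ [0,1]} |D_n^{M,1}(f; x) − f(x)| ≤ C ω_2(f; 1/√n), where ω_2(f; δ) = sup{ |f(x + h) − 2f(x) + f(x − h)| : 0 < h ≤ δ, x ± h ∈ [0,1] } is the second-order modulus of smoothness. -/

import Mathlib

open Filter Topology

/-- Bernstein basis polynomial `p_{n,k}(x)`, zero when `k < 0` or `k > n`. -/
noncomputable def bern (n : ℕ) (k : ℤ) (x : ℝ) : ℝ :=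
  if 0 ≤ k ∧ k ≤ (n : ℤ) then (n.choose k.toNat : ℝ) * x ^ k.toNat * (1 - x) ^ (n - k.toNat)
  else 0

/-- Modified Bernstein basis `p_{n,k}^{M,1}(x)` of Khosravian-Arab et al. -/
noncomputable def pM1 (a0 a1 : ℕ → ℝ) (n : ℕ) (k : ℤ) (x : ℝ) : ℝ :=
  (a1 n * x + a0 n) * bern (n - 1) k x + (a1 n * (1 - x) + a0 n) * bern (n - 1) (k - 1) x

/-- First-order modified Durrmeyer operator `D_n^{M,1}(f;x)`. -/
noncomputable def DM1 (a0 a1 : ℕ → ℝ) (n : ℕ) (f : ℝ → ℝ) (x : ℝ) : ℝ :=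
  ((n : ℝ) + 1) * ∑ k ∈ Finset.range (n + 1),
    pM1 a0 a1 n k x * ∫ t in (0:ℝ)..1, bern n k t * f t

/-- Second-order modulus of smoothness of `f` on `[0,1]`. -/
noncomputable def omega2 (f : ℝ → ℝ) (δ : ℝ) : ℝ :=
  sSup {v | ∃ x h : ℝ, 0 < h ∧ h ≤ δ ∧ x - h ∈ Set.Icc (0:ℝ) 1 ∧ x + h ∈ Set.Icc (0:ℝ) 1 ∧
    v = |f (x + h) - 2 * f x + f (x - h)|}

/-- Bernstein basis with natural index. -/
noncomputable def BB (n k : ℕ) (x : ℝ) : ℝ := (n.choose k : ℝ) * x ^ k * (1 - x) ^ (n - k)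

lemma BB_eq_eval (n k : ℕ) (x : ℝ) : BB n k x = (bernsteinPolynomial ℝ n k).eval x := by
  simp [BB, bernsteinPolynomial]

lemma bern_nat (n k : ℕ) (x : ℝ) : bern n (k : ℤ) x = BB n k x := by
  unfold bern BB
  split_ifs with h
  · simp
  · have : n < k := by
      by_contra h'
      apply h
      constructor
      · positivity
      · exact_mod_cast not_lt.mp h'
    simp [Nat.choose_eq_zero_of_lt this]

lemma BB_of_lt {n k : ℕ} (h : n < k) (x : ℝ) : BB n k x = 0 := by
  simp [BB, Nat.choose_eq_zero_of_lt h]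

lemma BB_nonneg (n k : ℕ) {x : ℝ} (h0 : 0 ≤ x) (h1 : x ≤ 1) : 0 ≤ BB n k x := by
  unfold BB
  have : 0 ≤ 1 - x := by linarith
  positivity

lemma BB_cont (n k : ℕ) : Continuous (BB n k) := by
  unfold BB
  fun_prop

lemma BB_sum0 (n : ℕ) (x : ℝ) : ∑ k ∈ Finset.range (n + 1), BB n k x = 1 := by
  simp_rw [BB_eq_eval]
  rw [← Polynomial.eval_finsetSum, bernsteinPolynomial.sum]
  simp

lemma BB_sum1 (n : ℕ) (x : ℝ) : ∑ k ∈ Finset.range (n + 1), BB n k x * k = n * x := by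
  have h := congrArg (Polynomial.eval x) (bernsteinPolynomial.sum_smul ℝ n)
  rw [Polynomial.eval_finsetSum] at h
  simp only [nsmul_eq_mul, Polynomial.eval_mul, Polynomial.eval_natCast, Polynomial.eval_X] at h
  rw [← h]
  refine Finset.sum_congr rfl fun k _ => ?_
  rw [BB_eq_eval]; ring

lemma natpred (k : ℕ) : ((k * (k - 1) : ℕ) : ℝ) = (k : ℝ) * ((k : ℝ) - 1) := by
  cases k <;> simp

lemma BB_sum2 (n : ℕ) (x : ℝ) :
    ∑ k ∈ Finset.range (n + 1), BB n k x * ((k : ℝ) * ((k : ℝ) - 1))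
      = (n : ℝ) * ((n : ℝ) - 1) * x ^ 2 := by
  have h := congrArg (Polynomial.eval x) (bernsteinPolynomial.sum_mul_smul ℝ n)
  rw [Polynomial.eval_finsetSum] at h
  simp only [nsmul_eq_mul, Polynomial.eval_mul, Polynomial.eval_natCast, Polynomial.eval_X,
    Polynomial.eval_pow, natpred] at h
  rw [← h]
  refine Finset.sum_congr rfl fun k _ => ?_
  rw [BB_eq_eval]; ring

lemma BB_sum_quad (n : ℕ) (x a b c : ℝ) :
    ∑ k ∈ Finset.range (n + 1), BB n k x * (a * ((k : ℝ) * ((k : ℝ) - 1)) + b * k + c)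
      = a * ((n : ℝ) * ((n : ℝ) - 1) * x ^ 2) + b * (n * x) + c := by
  have h : ∀ k : ℕ, BB n k x * (a * ((k : ℝ) * ((k : ℝ) - 1)) + b * k + c)
      = a * (BB n k x * ((k : ℝ) * ((k : ℝ) - 1))) + b * (BB n k x * k) + c * BB n k x := by
    intro k; ring
  simp_rw [h]
  rw [Finset.sum_add_distrib, Finset.sum_add_distrib, ← Finset.mul_sum, ← Finset.mul_sum,
    ← Finset.mul_sum, BB_sum0, BB_sum1, BB_sum2]
  ring

lemma BB_int (n : ℕ) : ∀ k : ℕ, k ≤ n → ∫ t in (0:ℝ)..1, BB n k t = 1 / ((n : ℝ) + 1) := by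
  intro k
  induction k with
  | zero =>
    intro _
    simp only [BB, Nat.choose_zero_right, Nat.cast_one, pow_zero, one_mul, Nat.sub_zero]
    rw [intervalIntegral.integral_comp_sub_left (fun t => t ^ n) (1:ℝ)]
    simp
  | succ k ih =>
    intro hk
    rw [← ih (by omega)]
    have hd : ∀ t ∈ Set.uIcc (0:ℝ) 1, HasDerivAt
        (fun t => (bernsteinPolynomial ℝ (n+1) (k+1)).eval t)
        (((n:ℝ)+1) * (BB n k t - BB n (k+1) t)) t := by
      intro t _
      have h := (bernsteinPolynomial ℝ (n+1) (k+1)).hasDerivAt t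
      rw [bernsteinPolynomial.derivative_succ_aux] at h
      simpa [BB_eq_eval] using h
    have h := intervalIntegral.integral_eq_sub_of_hasDerivAt hd
      (Continuous.intervalIntegrable (by have := BB_cont n k; have := BB_cont n (k+1); fun_prop) _ _)
    rw [bernsteinPolynomial.eval_at_1, bernsteinPolynomial.eval_at_0, if_neg (by omega),
      if_neg (by omega), intervalIntegral.integral_const_mul, intervalIntegral.integral_sub
      ((BB_cont n k).intervalIntegrable _ _) ((BB_cont n (k+1)).intervalIntegrable _ _)] at h
    have h3 : ((n:ℝ)+1) ≠ 0 := by positivity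
    simp [h3] at h
    linarith

lemma BB_mul_t (n k : ℕ) (t : ℝ) :
    t * BB n k t = ((k : ℝ) + 1) / ((n : ℝ) + 1) * BB (n+1) (k+1) t := by
  unfold BB
  have h : ((n:ℝ)+1) * (n.choose k : ℝ) = ((n+1).choose (k+1) : ℝ) * ((k:ℝ)+1) := by
    exact_mod_cast Nat.add_one_mul_choose_eq n k
  have h3 : ((n:ℝ)+1) ≠ 0 := by positivity
  rw [Nat.add_sub_add_right, pow_succ]
  field_simp
  linear_combination t * t^k * (1-t)^(n-k) * h

lemma BB_int1 (n k : ℕ) (hk : k ≤ n) : ((n:ℝ)+1) * ∫ t in (0:ℝ)..1, BB n k t * t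
    = ((k:ℝ)+1) / ((n:ℝ)+2) := by
  simp_rw [mul_comm (BB n k _), BB_mul_t]
  rw [intervalIntegral.integral_const_mul, BB_int _ _ (by omega)]
  push_cast
  field_simp
  ring

lemma BB_int2 (n k : ℕ) (hk : k ≤ n) : ((n:ℝ)+1) * ∫ t in (0:ℝ)..1, BB n k t * t ^ 2
    = ((k:ℝ)+1) * ((k:ℝ)+2) / (((n:ℝ)+2) * ((n:ℝ)+3)) := by
  have : ∀ t, BB n k t * t ^ 2 = ((k : ℝ) + 1) / ((n : ℝ) + 1) *
      (((k+1:ℕ) : ℝ) + 1) / (((n+1:ℕ) : ℝ) + 1) * BB (n+2) (k+2) t := by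
    intro t
    have h1 := BB_mul_t n k t
    have h2 := BB_mul_t (n+1) (k+1) t
    calc _ = t * (t * BB n k t) := by ring
      _ = ((k : ℝ) + 1) / ((n : ℝ) + 1) * (t * BB (n+1) (k+1) t) := by rw [h1]; ring
      _ = _ := by rw [h2]; ring
  simp_rw [this]
  rw [intervalIntegral.integral_const_mul, BB_int _ _ (by omega)]
  push_cast
  field_simp
  ring

lemma BB_int_quad (n k : ℕ) (hk : k ≤ n) (a b c : ℝ) :
    ((n:ℝ)+1) * ∫ t in (0:ℝ)..1, BB n k t * (a * t ^ 2 + b * t + c)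
    = a * (((k:ℝ)+1) * ((k:ℝ)+2) / (((n:ℝ)+2) * ((n:ℝ)+3))) + b * (((k:ℝ)+1) / ((n:ℝ)+2)) + c := by
  have hB := BB_cont n k
  have : ∀ t, BB n k t * (a * t ^ 2 + b * t + c)
    = a * (BB n k t * t ^ 2) + b * (BB n k t * t) + c * BB n k t := by intro t; ring
  simp_rw [this]
  rw [intervalIntegral.integral_add, intervalIntegral.integral_add,
    intervalIntegral.integral_const_mul, intervalIntegral.integral_const_mul,
    intervalIntegral.integral_const_mul, ← BB_int1 n k hk, ← BB_int2 n k hk, BB_int n k hk]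
  · field_simp
  all_goals exact Continuous.intervalIntegrable (by fun_prop) _ _

lemma pM1_sum (m : ℕ) (g : ℕ → ℝ) (x : ℝ) :
    ∑ k ∈ Finset.range (m + 1 + 1), pM1 (fun _ => 2) (fun _ => -3) (m+1) k x * g k
     = ∑ k ∈ Finset.range (m + 1), BB m k x * ((2 - 3 * x) * g k + (3 * x - 1) * g (k+1)) := by
  have hc : ∀ k : ℕ, (((k + 1 : ℕ) : ℤ) - 1) = (k : ℤ) := by intro k; push_cast; ring
  have hb : ∀ m : ℕ, bern m (((0:ℕ) : ℤ) - 1) x = 0 := by intro m; simp [bern]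
  have h : ∀ k : ℕ, pM1 (fun _ => 2) (fun _ => -3) (m+1) k x * g k
     = (2 - 3 * x) * (BB m k x * g k) + (3 * x - 1) * (bern m ((k:ℤ) - 1) x * g k) := by
    intro k
    simp only [pM1, Nat.add_sub_cancel, bern_nat]
    ring
  simp_rw [h]
  rw [Finset.sum_add_distrib, ← Finset.mul_sum, ← Finset.mul_sum, Finset.sum_range_succ,
    Finset.sum_range_succ' (fun k : ℕ => bern m ((k:ℤ) - 1) x * g k)]
  rw [BB_of_lt (Nat.lt_succ_self m), hb]
  simp only [hc, bern_nat, zero_mul, add_zero, Finset.mul_sum]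
  rw [← Finset.sum_add_distrib]
  refine Finset.sum_congr rfl fun k _ => ?_
  ring

lemma DM1_eq (m : ℕ) (f : ℝ → ℝ) (x : ℝ) :
    DM1 (fun _ => 2) (fun _ => -3) (m+1) f x = ∑ k ∈ Finset.range (m + 1), BB m k x *
      ((2 - 3 * x) * ((((m+1:ℕ):ℝ)+1) * ∫ t in (0:ℝ)..1, BB (m+1) k t * f t)
      + (3 * x - 1) * ((((m+1:ℕ):ℝ)+1) * ∫ t in (0:ℝ)..1, BB (m+1) (k+1) t * f t)) := by
  unfold DM1
  simp_rw [bern_nat (m+1)]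
  rw [pM1_sum m (fun k => ∫ t in (0:ℝ)..1, BB (m+1) k t * f t), Finset.mul_sum]
  refine Finset.sum_congr rfl fun k _ => ?_
  ring

/-- The operator reproduces affine functions. -/
lemma DM1_affine (m : ℕ) (p q x : ℝ) :
    DM1 (fun _ => 2) (fun _ => -3) (m+1) (fun t => p * t + q) x = p * x + q := by
  rw [DM1_eq]
  have h : ∀ k ∈ Finset.range (m+1), BB m k x *
      ((2 - 3 * x) * ((((m+1:ℕ):ℝ)+1) * ∫ t in (0:ℝ)..1, BB (m+1) k t * (p * t + q))
      + (3 * x - 1) * ((((m+1:ℕ):ℝ)+1) * ∫ t in (0:ℝ)..1, BB (m+1) (k+1) t * (p * t + q)))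
      = BB m k x * (0 * ((k:ℝ) * ((k:ℝ) - 1)) + p / ((m:ℝ)+3) * k
        + (p * (3 * x) / ((m:ℝ)+3) + q)) := by
    intro k hk
    have hk' := Finset.mem_range.mp hk
    have h1 := BB_int_quad (m+1) k (by omega) 0 p q
    have h2 := BB_int_quad (m+1) (k+1) (by omega) 0 p q
    simp only [zero_mul, zero_add] at h1 h2
    rw [h1, h2]
    push_cast
    congr 1
    field_simp
    ring
  rw [Finset.sum_congr rfl h, BB_sum_quad]
  field_simp
  ring

lemma DM1_sub (m : ℕ) (f g : ℝ → ℝ) (hf : ContinuousOn f (Set.Icc 0 1))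
    (hg : ContinuousOn g (Set.Icc 0 1)) (x : ℝ) :
    DM1 (fun _ => 2) (fun _ => -3) (m+1) (fun t => f t - g t) x
    = DM1 (fun _ => 2) (fun _ => -3) (m+1) f x - DM1 (fun _ => 2) (fun _ => -3) (m+1) g x := by
  rw [DM1_eq, DM1_eq, DM1_eq, ← Finset.sum_sub_distrib]
  refine Finset.sum_congr rfl fun k _ => ?_
  have h : ∀ n k : ℕ, ∫ t in (0:ℝ)..1, BB n k t * (f t - g t)
      = (∫ t in (0:ℝ)..1, BB n k t * f t) - ∫ t in (0:ℝ)..1, BB n k t * g t := by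
    intro n k
    rw [← intervalIntegral.integral_sub]
    · congr 1; ext t; ring
    all_goals
      apply ContinuousOn.intervalIntegrable
      rw [Set.uIcc_of_le zero_le_one]
      exact (BB_cont n k).continuousOn.mul (by assumption)
  rw [h, h]
  ring

lemma DM1_bound (m : ℕ) (F : ℝ → ℝ) (hF : ContinuousOn F (Set.Icc 0 1)) (w x : ℝ)
    (hw : 0 ≤ w) (hx : x ∈ Set.Icc (0:ℝ) 1)
    (hb : ∀ t ∈ Set.Icc (0:ℝ) 1, |F t| ≤ w * (19 + 8 * ((m:ℝ)+1) * (t - x) ^ 2)) :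
    |DM1 (fun _ => 2) (fun _ => -3) (m+1) F x| ≤ 108 * w := by
  obtain ⟨hx0, hx1⟩ := hx
  set A := w * 8 * ((m:ℝ)+1) with hA
  have hI : ∀ k ≤ m+1, |(((m+1:ℕ):ℝ)+1) * ∫ t in (0:ℝ)..1, BB (m+1) k t * F t| ≤
      A * (((k:ℝ)+1) * ((k:ℝ)+2) / ((((m+1:ℕ):ℝ)+2) * (((m+1:ℕ):ℝ)+3)))
      + (-2 * A * x) * (((k:ℝ)+1) / (((m+1:ℕ):ℝ)+2)) + (A * x ^ 2 + 19 * w) := by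
    intro k hk
    rw [← BB_int_quad (m+1) k hk, abs_mul, abs_of_nonneg (by positivity)]
    gcongr
    have hB := BB_cont (m+1) k
    refine (intervalIntegral.abs_integral_le_integral_abs zero_le_one).trans ?_
    apply intervalIntegral.integral_mono_on zero_le_one
    · apply ContinuousOn.intervalIntegrable
      rw [Set.uIcc_of_le zero_le_one]
      exact (hB.continuousOn.mul hF).abs
    · exact Continuous.intervalIntegrable (by fun_prop) _ _
    · intro t ht
      have h0 := BB_nonneg (m+1) k ht.1 ht.2
      rw [abs_mul, abs_of_nonneg h0]
      apply mul_le_mul_of_nonneg_left _ h0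
      refine (hb t ht).trans (le_of_eq ?_)
      rw [hA]; ring
  rw [DM1_eq]
  refine (Finset.abs_sum_le_sum_abs _ _).trans ?_
  have h : ∀ k ∈ Finset.range (m+1), |BB m k x *
      ((2 - 3 * x) * ((((m+1:ℕ):ℝ)+1) * ∫ t in (0:ℝ)..1, BB (m+1) k t * F t)
      + (3 * x - 1) * ((((m+1:ℕ):ℝ)+1) * ∫ t in (0:ℝ)..1, BB (m+1) (k+1) t * F t))|
      ≤ BB m k x * (4 * A / (((m:ℝ)+3) * ((m:ℝ)+4)) * ((k:ℝ) * ((k:ℝ) - 1))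
        + (20 * A / (((m:ℝ)+3) * ((m:ℝ)+4)) - 8 * A * x / ((m:ℝ)+3)) * k
        + (16 * A / (((m:ℝ)+3) * ((m:ℝ)+4)) - 12 * A * x / ((m:ℝ)+3)
          + 4 * A * x ^ 2 + 76 * w)) := by
    intro k hk
    have hk' := Finset.mem_range.mp hk
    have h0 := BB_nonneg m k hx0 hx1
    rw [abs_mul, abs_of_nonneg h0]
    apply mul_le_mul_of_nonneg_left _ h0
    refine (abs_add_le _ _).trans ?_
    rw [abs_mul (2 - 3 * x), abs_mul (3 * x - 1)]
    have h1 := hI k (by omega)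
    have h2 := hI (k+1) (by omega)
    have a1 : |2 - 3 * x| ≤ 2 := abs_le.mpr ⟨by linarith, by linarith⟩
    have a2 : |3 * x - 1| ≤ 2 := abs_le.mpr ⟨by linarith, by linarith⟩
    refine (add_le_add (mul_le_mul a1 h1 (abs_nonneg _) (by norm_num))
      (mul_le_mul a2 h2 (abs_nonneg _) (by norm_num))).trans (le_of_eq ?_)
    push_cast
    field_simp
    ring
  refine (Finset.sum_le_sum h).trans ?_
  rw [BB_sum_quad]
  have e : 4 * A / (((m:ℝ)+3) * ((m:ℝ)+4)) * ((m:ℝ) * ((m:ℝ) - 1) * x ^ 2)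
        + (20 * A / (((m:ℝ)+3) * ((m:ℝ)+4)) - 8 * A * x / ((m:ℝ)+3)) * (m * x)
        + (16 * A / (((m:ℝ)+3) * ((m:ℝ)+4)) - 12 * A * x / ((m:ℝ)+3)
          + 4 * A * x ^ 2 + 76 * w)
      = 76 * w + w * (16 * (((m:ℝ)+1) * (4 * m * (x * (1 - x)) - 24 * (x * (1 - x)) + 8)
          / (((m:ℝ)+3) * ((m:ℝ)+4)))) := by
    rw [hA]
    field_simp
    ring
  rw [e]
  have h5 : ((m:ℝ)+1) * (4 * m * (x * (1 - x)) - 24 * (x * (1 - x)) + 8)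
          / (((m:ℝ)+3) * ((m:ℝ)+4)) ≤ 2 := by
    rw [div_le_iff₀ (by positivity)]
    have hm : (0:ℝ) ≤ m := by positivity
    have hy0 : 0 ≤ x * (1 - x) := mul_nonneg hx0 (by linarith)
    have hy1 : x * (1 - x) ≤ 1 / 4 := by nlinarith [sq_nonneg (x - 1/2)]
    have : 4 * m * (x * (1 - x)) - 24 * (x * (1 - x)) + 8 ≤ m + 8 := by nlinarith
    nlinarith
  nlinarith [mul_le_mul_of_nonneg_left h5 hw]

lemma omega2_ge (f : ℝ → ℝ) (hf : ContinuousOn f (Set.Icc 0 1)) (δ y h : ℝ) (h0 : 0 < h)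
    (h1 : h ≤ δ) (h2 : 0 ≤ y - h) (h3 : y + h ≤ 1) :
    |f (y + h) - 2 * f y + f (y - h)| ≤ omega2 f δ := by
  obtain ⟨M, hM⟩ := isCompact_Icc.exists_bound_of_continuousOn hf
  apply le_csSup
  · refine ⟨4 * M, ?_⟩
    rintro v ⟨x, h, hh, _, ha, hb, rfl⟩
    have e1 := abs_le.mp (hM _ ha)
    have e2 := abs_le.mp (hM _ hb)
    have e3 := abs_le.mp (hM x ⟨by linarith [ha.1], by linarith [hb.2]⟩)
    exact abs_le.mpr ⟨by linarith [e1.1, e1.2, e2.1, e2.2, e3.1, e3.2],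
      by linarith [e1.1, e1.2, e2.1, e2.2, e3.1, e3.2]⟩
  · exact ⟨y, h, h0, h1, ⟨h2, by linarith⟩, ⟨by linarith, h3⟩, rfl⟩

lemma omega2_nonneg (f : ℝ → ℝ) (δ : ℝ) : 0 ≤ omega2 f δ := by
  apply Real.sSup_nonneg
  rintro v ⟨x, h, _, _, _, _, rfl⟩
  positivity

lemma cell_bound (F : ℝ → ℝ) (a b w : ℝ) (hab : a ≤ b) (hF : ContinuousOn F (Set.Icc a b))
    (ha : F a = 0) (hb : F b = 0) (hw : 0 ≤ w)
    (h : ∀ y h, 0 < h → a ≤ y - h → y + h ≤ b → |F (y + h) - 2 * F y + F (y - h)| ≤ w) :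
    ∀ t ∈ Set.Icc a b, |F t| ≤ w := by
  obtain ⟨y, hy, hmax⟩ := isCompact_Icc.exists_isMaxOn (Set.nonempty_Icc.mpr hab) hF.abs
  have hmax' : ∀ t ∈ Set.Icc a b, |F t| ≤ |F y| := fun t ht => hmax ht
  suffices |F y| ≤ w from fun t ht => (hmax' t ht).trans this
  obtain ⟨h1, h2⟩ := hy
  rcases eq_or_lt_of_le h1 with e | h1
  · rw [← e, ha]; simpa
  rcases eq_or_lt_of_le h2 with e | h2
  · rw [e, hb]; simpa
  rcases le_total y ((a + b) / 2) with hc | hc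
  · have k := h y (y - a) (by linarith) (by linarith) (by linarith)
    have k2 := hmax' (y + (y - a)) ⟨by linarith, by linarith⟩
    rw [sub_sub_cancel, ha] at k
    rcases abs_cases (F y) with c | c <;> rw [abs_le] at k k2 <;> linarith [k.1, k.2, k2.1, k2.2]
  · have k := h y (b - y) (by linarith) (by linarith) (by linarith)
    have k2 := hmax' (y - (b - y)) ⟨by linarith, by linarith⟩
    rw [add_sub_cancel, hb] at k
    rcases abs_cases (F y) with c | c <;> rw [abs_le] at k k2 <;> linarith [k.1, k.2, k2.1, k2.2]

lemma disc_up (u : ℕ → ℝ) (N j : ℕ) (w : ℝ)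
    (h : ∀ i, i + 2 ≤ N → |u (i+2) - 2 * u (i+1) + u i| ≤ w) (h0 : u j = 0) (h1 : u (j+1) = 0) :
    ∀ m, j + m + 1 ≤ N → |u (j+m+1) - u (j+m)| ≤ m * w ∧ |u (j+m)| ≤ (m:ℝ)^2 * w := by
  intro m
  induction m with
  | zero => intro _; simp [h0, h1]
  | succ m ih =>
    intro hm
    obtain ⟨i1, i2⟩ := ih (by omega)
    have k := h (j+m) (by omega)
    have e1 : j + (m+1) = j + m + 1 := by ring
    have e2 : j + (m+1) + 1 = j + m + 2 := by ring
    have hw : 0 ≤ w := (abs_nonneg _).trans k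
    have hmw : 0 ≤ m * w := by positivity
    rw [e2, e1]
    rw [abs_le] at k i1 i2
    push_cast
    constructor <;> rw [abs_le] <;> constructor <;> nlinarith [k.1, k.2, i1.1, i1.2, i2.1, i2.2]

lemma disc_up' (u : ℕ → ℝ) (N j : ℕ) (w : ℝ) (hw : 0 ≤ w) (hj : j + 1 ≤ N)
    (h : ∀ i, i + 2 ≤ N → |u (i+2) - 2 * u (i+1) + u i| ≤ w) (h0 : u j = 0) (h1 : u (j+1) = 0) :
    ∀ i, j ≤ i → i ≤ N → |u i| ≤ ((i:ℝ) - j)^2 * w := by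
  intro i hi hN
  rcases eq_or_lt_of_le hi with e | hi
  · rw [← e, h0]; simp
  obtain ⟨m, rfl⟩ := Nat.exists_eq_add_of_lt hi
  obtain ⟨i1, i2⟩ := disc_up u N j w h h0 h1 m (by omega)
  have hmw : 0 ≤ m * w := by positivity
  rw [abs_le] at i1 i2
  push_cast
  rw [abs_le]
  constructor <;> nlinarith [i1.1, i1.2, i2.1, i2.2]

lemma disc (u : ℕ → ℝ) (N j : ℕ) (w : ℝ) (hw : 0 ≤ w) (hj : j + 1 ≤ N)
    (h : ∀ i, i + 2 ≤ N → |u (i+2) - 2 * u (i+1) + u i| ≤ w) (h0 : u j = 0) (h1 : u (j+1) = 0) :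
    ∀ i, i ≤ N → |u i| ≤ (|(i:ℝ) - j| + 1)^2 * w := by
  intro i hi
  rcases le_total j i with hji | hji
  · refine (disc_up' u N j w hw hj h h0 h1 i hji hi).trans ?_
    apply mul_le_mul_of_nonneg_right _ hw
    rw [← sq_abs]
    gcongr
    linarith
  · have k := disc_up' (fun i => u (N - i)) N (N - (j+1)) w hw (by omega) ?_ ?_ ?_ (N - i)
      (by omega) (by omega)
    · try simp only at k
      rw [Nat.sub_sub_self hi] at k
      refine k.trans ?_
      apply mul_le_mul_of_nonneg_right _ hw
      rw [Nat.cast_sub hi, Nat.cast_sub hj, ← sq_abs]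
      gcongr
      push_cast
      have : (N:ℝ) - i - (N - (j + 1)) = -((i:ℝ) - j) + 1 := by ring
      rw [this]
      refine (abs_add_le _ _).trans ?_
      rw [abs_neg]; simp
    · intro l hl
      have k := h (N - (l+2)) (by omega)
      have e1 : N - (l+2) + 2 = N - l := by omega
      have e2 : N - (l+2) + 1 = N - (l+1) := by omega
      rw [e1, e2] at k
      try simp only
      rwa [show u (N - (l + 2)) - 2 * u (N - (l + 1)) + u (N - l)
        = u (N - l) - 2 * u (N - (l + 1)) + u (N - (l + 2)) by ring]
    · simp only [Nat.sub_sub_self hj, h1]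
    · have : N - (N - (j+1) + 1) = j := by omega
      simp only [this, h0]

lemma exists_cell (N : ℕ) (hN : 1 ≤ N) (t : ℝ) (ht : t ∈ Set.Icc (0:ℝ) 1) :
    ∃ i : ℕ, i + 1 ≤ N ∧ (i:ℝ) ≤ t * N ∧ t * N ≤ i + 1 := by
  obtain ⟨h0, h1⟩ := ht
  have hN' : (0:ℝ) < N := by exact_mod_cast hN
  rcases eq_or_lt_of_le h1 with e | h1
  · refine ⟨N - 1, by omega, ?_, ?_⟩ <;> rw [Nat.cast_sub hN, e] <;> simp
  · refine ⟨⌊t * N⌋₊, ?_, Nat.floor_le (by positivity), (Nat.lt_floor_add_one _).le⟩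
    have : ⌊t * N⌋₊ < N := (Nat.floor_lt (by positivity)).mpr (by nlinarith)
    omega

set_option maxHeartbeats 1000000 in
lemma grid_bound (F : ℝ → ℝ) (hF : ContinuousOn F (Set.Icc 0 1)) (N j : ℕ) (hj : j + 1 ≤ N)
    (w x : ℝ) (hw : 0 ≤ w)
    (h : ∀ y h, 0 < h → h ≤ 1 / (N:ℝ) → 0 ≤ y - h → y + h ≤ 1 →
      |F (y + h) - 2 * F y + F (y - h)| ≤ w)
    (h0 : F (j / N) = 0) (h1 : F (((j:ℝ)+1) / N) = 0) (hx0 : (j:ℝ) ≤ x * N) (hx1 : x * N ≤ j + 1) :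
    ∀ t ∈ Set.Icc (0:ℝ) 1, |F t| ≤ w * (19 + 2 * (N:ℝ)^2 * (t - x)^2) := by
  intro t ht
  have hN' : (0:ℝ) < N := by exact_mod_cast (show 0 < N by omega)
  obtain ⟨i, hi, hi0, hi1⟩ := exists_cell N (by omega) t ht
  have hd := disc (fun i => F (i / N)) N j w hw hj ?_ h0 (by simpa using h1)
  · have d1 := hd i (by omega)
    have d2 := hd (i+1) hi
    try simp only at d1 d2
    push_cast at d2
    have hiN : (i:ℝ) + 1 ≤ N := by exact_mod_cast hi
    set a : ℝ := i / N with ha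
    set b : ℝ := ((i:ℝ)+1) / N with hb
    have haN : a * N = i := by rw [ha]; field_simp
    have hbN : b * N = i + 1 := by rw [hb]; field_simp
    have ha0 : 0 ≤ a := by positivity
    have hb1 : b ≤ 1 := by rw [hb, div_le_one hN']; exact hiN
    have hba : b - a = 1 / N := by rw [ha, hb]; ring
    have hN1 : 0 < 1 / (N:ℝ) := by positivity
    have hc := cell_bound (fun s => F s - (F a + (F b - F a) * (s * N - i))) a b w
      (by linarith) ?_ ?_ ?_ hw ?_ t ⟨?_, ?_⟩
    · try simp only at hc
      set θ := t * N - i with hθ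
      have t0 : 0 ≤ θ := by linarith
      have t1 : θ ≤ 1 := by linarith
      have hK : |(i:ℝ) - j| ≤ N * |t - x| + 1 := by
        have : |(N:ℝ) * (t - x)| = N * |t - x| := by rw [abs_mul, abs_of_pos hN']
        rw [← this]
        rcases abs_cases ((N:ℝ) * (t - x)) with c | c <;> rw [abs_le] <;> constructor <;> linarith
      have hK2 : |(i:ℝ) + 1 - j| ≤ |(i:ℝ) - j| + 1 := by
        rw [show (i:ℝ) + 1 - j = ((i:ℝ) - j) + 1 by ring]
        refine (abs_add_le _ _).trans ?_
        simp
      set L := (N * |t - x| + 3)^2 * w with hL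
      have b1 : |F a| ≤ L := d1.trans (by
        apply mul_le_mul_of_nonneg_right _ hw
        apply pow_le_pow_left₀ (by positivity); linarith)
      have b2 : |F b| ≤ L := d2.trans (by
        apply mul_le_mul_of_nonneg_right _ hw
        apply pow_le_pow_left₀ (by positivity); linarith)
      have b3 : |F a + (F b - F a) * θ| ≤ L := by
        rw [abs_le] at b1 b2 ⊢
        constructor <;> nlinarith [b1.1, b1.2, b2.1, b2.2]
      have b4 : |F t| ≤ w + L := by
        have := abs_add_le (F t - (F a + (F b - F a) * θ)) (F a + (F b - F a) * θ)
        rw [sub_add_cancel] at this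
        linarith
      refine b4.trans ?_
      rw [hL, ← sq_abs (t - x)]
      have : (N * |t - x| + 3)^2 ≤ 18 + 2 * (N:ℝ)^2 * |t - x|^2 := by
        nlinarith [sq_nonneg (N * |t - x| - 3)]
      nlinarith [mul_le_mul_of_nonneg_right this hw]
    · apply ContinuousOn.sub
      · exact hF.mono (Set.Icc_subset_Icc ha0 hb1)
      · fun_prop
    · simp only [haN]; ring
    · simp only [hbN]; ring
    · intro y k k0 k1 k2
      have := h y k k0 (by linarith) (by linarith) (by linarith)
      try simp only
      convert this using 2
      ring
    · rw [ha, div_le_iff₀ hN']; exact hi0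
    · rw [hb, le_div_iff₀ hN']; exact hi1
  · intro l hl
    have hl' : (l:ℝ) + 2 ≤ N := by exact_mod_cast hl
    have e := h (((l:ℝ)+1) / N) (1 / N) (by positivity) le_rfl ?_ ?_
    · have e1 : ((l:ℝ)+1) / N + 1 / N = (l+2) / N := by ring
      have e2 : ((l:ℝ)+1) / N - 1 / N = l / N := by ring
      rw [e1, e2] at e
      simpa using e
    · rw [show ((l:ℝ)+1) / N - 1 / N = l / N by ring]; positivity
    · rw [show ((l:ℝ)+1) / N + 1 / N = (l+2) / N by ring, div_le_one hN']; exact hl'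

theorem DM1_second_order_estimate :
    ∃ C > (0:ℝ), ∀ f : ℝ → ℝ, ContinuousOn f (Set.Icc 0 1) →
      ∀ n : ℕ, 1 ≤ n → ∀ x ∈ Set.Icc (0:ℝ) 1,
        |DM1 (fun _ => 2) (fun _ => -3) n f x - f x| ≤ C * omega2 f (1 / Real.sqrt n) := by
  refine ⟨127, by norm_num, ?_⟩
  intro f hf n hn x hx
  obtain ⟨m, rfl⟩ := Nat.exists_eq_add_of_le' hn
  set w := omega2 f (1 / Real.sqrt ((m+1:ℕ):ℝ)) with hw
  have hw0 : 0 ≤ w := omega2_nonneg _ _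
  set N := ⌈Real.sqrt ((m+1:ℕ):ℝ)⌉₊ with hN
  have hs1 : 1 ≤ Real.sqrt ((m+1:ℕ):ℝ) := by
    rw [Real.one_le_sqrt]; push_cast; linarith [Nat.cast_nonneg (α := ℝ) m]
  have hsN : Real.sqrt ((m+1:ℕ):ℝ) ≤ N := Nat.le_ceil _
  have hNs : (N:ℝ) < Real.sqrt ((m+1:ℕ):ℝ) + 1 := Nat.ceil_lt_add_one (by linarith)
  have hss : Real.sqrt ((m+1:ℕ):ℝ) ^ 2 = (m:ℝ) + 1 := by
    rw [Real.sq_sqrt (by positivity)]; push_cast; ring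
  have hN1 : 1 ≤ N := by
    have : (1:ℝ) ≤ N := by linarith
    exact_mod_cast this
  have hN' : (0:ℝ) < N := by linarith
  have hNsq : (N:ℝ)^2 ≤ 4 * ((m:ℝ)+1) := by
    rw [← hss]; nlinarith
  obtain ⟨j, hj, hj0, hj1⟩ := exists_cell N hN1 x hx
  set p := (f (((j:ℝ)+1) / N) - f (j / N)) * N with hp
  set q := f (j / N) - (f (((j:ℝ)+1) / N) - f (j / N)) * j with hq
  have hl : ContinuousOn (fun t : ℝ => p * t + q) (Set.Icc 0 1) := by fun_prop
  have hF : ContinuousOn (fun t => f t - (p * t + q)) (Set.Icc 0 1) := hf.sub hl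
  have hb := grid_bound (fun t => f t - (p * t + q)) hF N j hj w x hw0 ?_ ?_ ?_ hj0 hj1
  · have hb' : ∀ t ∈ Set.Icc (0:ℝ) 1, |f t - (p * t + q)|
        ≤ w * (19 + 8 * ((m:ℝ)+1) * (t - x) ^ 2) := by
      intro t ht
      refine (hb t ht).trans ?_
      apply mul_le_mul_of_nonneg_left _ hw0
      nlinarith [mul_le_mul_of_nonneg_right hNsq (sq_nonneg (t - x))]
    have h1 := DM1_bound m (fun t => f t - (p * t + q)) hF w x hw0 hx hb'
    rw [DM1_sub m f (fun t => p * t + q) hf hl, DM1_affine] at h1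
    have h2 := hb' x hx
    simp only [sub_self, ne_eq, OfNat.ofNat_ne_zero, not_false_eq_true, zero_pow, mul_zero,
      add_zero] at h2
    rw [abs_le] at h1 h2 ⊢
    constructor <;> linarith [h1.1, h1.2, h2.1, h2.2]
  · intro y h h0 h1 h2 h3
    have := omega2_ge f hf (1 / Real.sqrt ((m+1:ℕ):ℝ)) y h h0
      (h1.trans (one_div_le_one_div_of_le (by linarith) hsN)) h2 h3
    try simp only
    convert this using 2
    ring
  · simp only [hp, hq]
    field_simp
    ring
  · simp only [hp, hq]
    field_simp
    ring
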